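/- The generalized hypergeometric series ₄F₃(3/4, 3/4, 3/4, 5/4; 3/2, 7/4, 7/4; 1/16) equals 36·[(1/(2√3))·ψ′(1/3) − π²·(1/10 + 1/(3√3))], where ψ′(1/3) = 9·∑_{k≥0} 1/(3k+1)². Concretely, the sum over n ≥ 0 of ((3/4)ₙ)³·(5/4)ₙ / ((3/2)ₙ·((7/4)ₙ)²·n!) · (1/16)ⁿ equals 36·[(9/(2√3))·∑_{k≥0} 1/(3k+1)² − π²·(1/10 + 1/(3√3))]. -/

import Mathlib

open Real

/-- The Pochhammer symbol (shifted factorial) `(a)ₙ` for a real number `a`. -/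
noncomputable def poch (a : ℝ) (n : ℕ) : ℝ := Polynomial.eval a (ascPochhammer ℝ n)

/-!
With `S(x) = ∑ (1/2)ₙ / n! · xⁿ / (2n+1)²`, comparing coefficients shows that the hypergeometric
series is `36 (S(1/4) - S(-1/4))`. The derivative of `sin θ · S(sin² θ)` is `θ cot θ` and that of
`Li₂(1 - e^{-2iθ})` is `2iθ cot θ + 2θ`, whence `2i sin θ · S(sin² θ) + θ² = Li₂(1 - e^{-2iθ})`.

For `θ = π/6` the right side is `Li₂(e^{iπ/3})`; its imaginary part is the Clausen value `Cl₂(π/3)`,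
which reduces to `Cl₂(2π/3)` and thus to `∑ 1/(3k+1)²`. For `θ = -i log φ` with the golden ratio `φ`
the right side is `Li₂(φ⁻¹) = π²/10 - log² φ`, which follows from the reflection, duplication and
Landen formulas for `Li₂`.
-/

open Set Filter Topology
open scoped Nat

section Pochhammer

lemma poch_zero (a : ℝ) : poch a 0 = 1 := by simp [poch]

lemma poch_succ (a : ℝ) (n : ℕ) : poch a (n + 1) = poch a n * (a + n) :=
  ascPochhammer_succ_eval n a

lemma poch_succ_left (a : ℝ) (n : ℕ) : poch a (n + 1) = a * poch (a + 1) n := by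
  simp [poch, ascPochhammer_succ_left]

lemma poch_pos {a : ℝ} (ha : 0 < a) (n : ℕ) : 0 < poch a n := ascPochhammer_pos n a ha

lemma poch_one (n : ℕ) : poch 1 n = n ! := ascPochhammer_eval_one ℝ n

lemma poch_le_poch {a b : ℝ} (ha : 0 < a) (hab : a ≤ b) (n : ℕ) : poch a n ≤ poch b n := by
  induction n with
  | zero => simp only [poch_zero, le_refl]
  | succ n ih =>
    rw [poch_succ, poch_succ]
    have := (poch_pos (ha.trans_le hab) n).le
    gcongr

lemma poch_two_mul (a : ℝ) (n : ℕ) :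
    poch (2 * a) (2 * n) = 4 ^ n * poch a n * poch (a + 1 / 2) n := by
  induction n with
  | zero => simp [poch_zero]
  | succ n ih =>
    rw [Nat.mul_succ, poch_succ, poch_succ, ih, poch_succ, poch_succ]
    push_cast
    ring

end Pochhammer

section PowerSeries

lemma hasSum_even_of_hasSum {𝕜 : Type*} [Field 𝕜] [CharZero 𝕜] [TopologicalSpace 𝕜]
    [IsTopologicalRing 𝕜] {f : ℕ → 𝕜} {a b : 𝕜} (ha : HasSum f a)
    (hb : HasSum (fun n ↦ (-1) ^ n * f n) b) : HasSum (fun n ↦ f (2 * n)) ((a + b) / 2) := by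
  convert ((mul_right_injective₀ two_ne_zero).hasSum_iff fun n hn ↦ ?_).2
    ((ha.add hb).div_const 2) using 1
  · ext n
    simp
  · obtain ⟨k, rfl | rfl⟩ := n.even_or_odd'
    · exact absurd ⟨k, rfl⟩ hn
    · simp [pow_succ]

lemma hasSum_odd_of_hasSum {𝕜 : Type*} [Field 𝕜] [CharZero 𝕜] [TopologicalSpace 𝕜]
    [IsTopologicalRing 𝕜] {f : ℕ → 𝕜} {a b : 𝕜} (ha : HasSum f a)
    (hb : HasSum (fun n ↦ (-1) ^ n * f n) b) : HasSum (fun n ↦ f (2 * n + 1)) ((a - b) / 2) := by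
  convert (((add_left_injective 1).comp (mul_right_injective₀ (two_ne_zero' ℕ))).hasSum_iff
    fun n hn ↦ ?_).2 ((ha.sub hb).div_const 2) using 1
  · ext n
    simp [pow_succ]
  · obtain ⟨k, rfl | rfl⟩ := n.even_or_odd'
    · simp
    · exact absurd ⟨k, rfl⟩ hn

variable {𝕜 : Type*} [RCLike 𝕜] {b : ℕ → 𝕜} {C : ℝ} {z : 𝕜}

lemma summable_mul_pow_of_bounded (hb : ∀ n, ‖b n‖ ≤ C) (hz : ‖z‖ < 1) :
    Summable fun n ↦ b n * z ^ n := by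
  refine .of_norm_bounded ((summable_geometric_of_lt_one (norm_nonneg z) hz).mul_left C) fun n ↦ ?_
  rw [norm_mul, norm_pow]
  gcongr
  exact hb n

lemma summable_nat_mul_pow_pred {r : ℝ} (hr : |r| < 1) :
    Summable fun n : ℕ ↦ (n : ℝ) * r ^ (n - 1) := by
  rw [← summable_nat_add_iff 1]
  simpa using (hasSum_choose_mul_geometric_of_norm_lt_one 1 hr).summable

lemma exists_hasDerivAt_tsum_mul_pow (hb : ∀ n, ‖b n‖ ≤ C) (hz : ‖z‖ < 1) :
    ∃ d, HasDerivAt (fun w ↦ ∑' n, b n * w ^ n) d z ∧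
      HasSum (fun n ↦ n * b n * z ^ n) (z * d) := by
  obtain ⟨r, hzr, hr⟩ := exists_between hz
  have hsum := (summable_nat_mul_pow_pred
    (abs_lt.2 ⟨by linarith [norm_nonneg z], hr⟩)).mul_left C
  have hbound : ∀ n, ∀ w ∈ Metric.ball (0 : 𝕜) r,
      ‖b n * (n * w ^ (n - 1))‖ ≤ C * (n * r ^ (n - 1)) := fun n w hw ↦ by
    have hC : 0 ≤ C := (norm_nonneg _).trans (hb 0)
    rw [norm_mul, norm_mul, norm_pow, RCLike.norm_natCast]
    gcongr
    · exact hb n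
    · exact (mem_ball_zero_iff.1 hw).le
  have hz' : z ∈ Metric.ball (0 : 𝕜) r := mem_ball_zero_iff.2 hzr
  refine ⟨_, hasDerivAt_tsum_of_isPreconnected hsum Metric.isOpen_ball
    Metric.isPreconnected_ball (fun n w _ ↦ (hasDerivAt_pow n w).const_mul (b n)) hbound hz'
    (summable_mul_pow_of_bounded hb hz) hz', ?_⟩
  refine ((Summable.of_norm_bounded hsum (hbound · z hz')).hasSum.mul_left z).congr_fun fun n ↦ ?_
  cases n with
  | zero => simp
  | succ n =>
    rw [Nat.add_sub_cancel, pow_succ]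
    ring

end PowerSeries

section Constancy

lemma eq_of_hasDerivAt_zero {E : Type*} [NormedAddCommGroup E] [NormedSpace ℝ E] [CompleteSpace E]
    {f : ℝ → E} {a b : ℝ} (hab : a ≤ b) (hf : ContinuousOn f (Icc a b))
    (hf' : ∀ x ∈ Ioo a b, HasDerivAt f 0 x) : f b = f a := by
  have := intervalIntegral.integral_eq_sub_of_hasDerivAt_of_le hab hf hf' intervalIntegrable_const
  rw [intervalIntegral.integral_zero] at this
  exact (sub_eq_zero.1 this.symm)

lemma continuousOn_comp_real_mul {X : Type*} [TopologicalSpace X] {f : ℂ → X} {s : Set ℝ} {z : ℂ}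
    (hf : ∀ t ∈ s, ContinuousAt f (t * z)) : ContinuousOn (fun t : ℝ ↦ f (t * z)) s := fun t ht ↦
  (ContinuousAt.comp (f := fun t : ℝ ↦ (t : ℂ) * z) (hf t ht) (by fun_prop)).continuousWithinAt

lemma eq_apply_zero_of_hasDerivAt_zero_on_ray {f : ℂ → ℂ} {z : ℂ}
    (hf : ContinuousOn (fun t : ℝ ↦ f (t * z)) (Icc 0 1))
    (hf' : ∀ t ∈ Ioo (0 : ℝ) 1, HasDerivAt f 0 (t * z)) : f z = f 0 := by
  have hray (t : ℝ) : HasDerivAt (fun s : ℂ ↦ s * z) z t := by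
    simpa using (hasDerivAt_id (t : ℂ)).mul_const z
  have := eq_of_hasDerivAt_zero zero_le_one hf fun t ht ↦ by
    simpa using ((hf' t ht).comp (t : ℂ) (hray t)).comp_ofReal
  simpa using this

end Constancy

section Dilogarithm

/-- The dilogarithm `Li₂(z) = ∑_{n ≥ 1} zⁿ / n²` on the closed unit disc. The sum may start at
`n = 0` since `1 / 0 = 0`. -/
noncomputable def dilog {𝕜 : Type*} [RCLike 𝕜] (z : 𝕜) : 𝕜 := ∑' n : ℕ, 1 / (n : 𝕜) ^ 2 * z ^ n

variable {𝕜 : Type*} [RCLike 𝕜] {z : 𝕜}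

lemma norm_dilog_term_le (n : ℕ) (hz : ‖z‖ ≤ 1) :
    ‖1 / (n : 𝕜) ^ 2 * z ^ n‖ ≤ 1 / (n : ℝ) ^ 2 := by
  rw [norm_mul, norm_div, norm_one, norm_pow, norm_pow, RCLike.norm_natCast]
  exact mul_le_of_le_one_right (by positivity) (pow_le_one₀ (norm_nonneg _) hz)

lemma hasSum_dilog (hz : ‖z‖ ≤ 1) : HasSum (fun n : ℕ ↦ 1 / (n : 𝕜) ^ 2 * z ^ n) (dilog z) :=
  (Summable.of_norm_bounded hasSum_zeta_two.summable (norm_dilog_term_le · hz)).hasSum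

lemma continuousOn_dilog : ContinuousOn dilog (Metric.closedBall (0 : 𝕜) 1) :=
  continuousOn_tsum (fun n ↦ by fun_prop) hasSum_zeta_two.summable
    fun n _ hz ↦ norm_dilog_term_le n (mem_closedBall_zero_iff.1 hz)

lemma dilog_zero : dilog (0 : 𝕜) = 0 := by
  rw [dilog, tsum_eq_single 0 fun n hn ↦ by simp [hn]]
  simp

lemma dilog_one : dilog (1 : ℝ) = π ^ 2 / 6 := by
  simpa [dilog] using hasSum_zeta_two.tsum_eq

lemma ofReal_dilog (x : ℝ) : ((dilog x : ℝ) : ℂ) = dilog (x : ℂ) := by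
  simp [dilog, Complex.ofReal_tsum]

lemma dilog_add_dilog_neg (hz : ‖z‖ ≤ 1) : dilog z + dilog (-z) = dilog (z ^ 2) / 2 := by
  have hz2 : ‖z ^ 2‖ ≤ 1 := by simpa using pow_le_one₀ (norm_nonneg z) hz (n := 2)
  have hneg : HasSum (fun n : ℕ ↦ (-1) ^ n * (1 / (n : 𝕜) ^ 2 * z ^ n)) (dilog (-z)) :=
    (hasSum_dilog (z := -z) (by rwa [norm_neg])).congr_fun fun n ↦ by rw [neg_pow z]; ring
  have heven := hasSum_even_of_hasSum (hasSum_dilog hz) hneg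
  have hsq : HasSum (fun n : ℕ ↦ 1 / ((2 * n : ℕ) : 𝕜) ^ 2 * z ^ (2 * n)) (dilog (z ^ 2) / 4) :=
    ((hasSum_dilog hz2).div_const 4).congr_fun fun n ↦ by push_cast; rw [pow_mul]; ring
  linear_combination 2 * heven.unique hsq

lemma exists_hasDerivAt_dilog (hz : ‖z‖ < 1) :
    ∃ d, HasDerivAt dilog d z ∧ HasSum (fun n : ℕ ↦ z ^ n / n) (z * d) := by
  have hcoeff (n : ℕ) : ‖1 / (n : 𝕜) ^ 2‖ ≤ 1 := by
    have := Nat.cast_inv_le_one (α := ℝ) (n ^ 2)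
    simpa using this
  obtain ⟨d, hd, hsum⟩ := exists_hasDerivAt_tsum_mul_pow hcoeff hz
  refine ⟨d, hd, hsum.congr_fun fun n ↦ ?_⟩
  rcases eq_or_ne n 0 with rfl | hn
  · simp
  · field_simp

lemma hasDerivAt_dilog_complex {z : ℂ} (hz : ‖z‖ < 1) (hz0 : z ≠ 0) :
    HasDerivAt dilog (-Complex.log (1 - z) / z) z := by
  obtain ⟨d, hd, hsum⟩ := exists_hasDerivAt_dilog hz
  rwa [← hsum.unique (Complex.hasSum_taylorSeries_neg_log hz), mul_div_cancel_left₀ _ hz0]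

lemma hasDerivAt_dilog_real {x : ℝ} (hx : |x| < 1) (hx0 : x ≠ 0) :
    HasDerivAt dilog (-log (1 - x) / x) x := by
  obtain ⟨d, hd, hsum⟩ := exists_hasDerivAt_dilog (z := x) hx
  have hlog := (hasSum_nat_add_iff' 1).2 hsum
  simp only [Finset.range_one, Finset.sum_singleton, Nat.cast_zero, div_zero, sub_zero,
    Nat.cast_add, Nat.cast_one] at hlog
  rwa [← hlog.unique (Real.hasSum_pow_div_log_of_abs_lt_one hx), mul_div_cancel_left₀ _ hx0]

lemma continuousOn_dilog_real : ContinuousOn dilog (Icc (-1 : ℝ) 1) := by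
  simpa [Real.closedBall_eq_Icc] using continuousOn_dilog (𝕜 := ℝ)

end Dilogarithm

section RealDilogarithm

lemma continuousAt_log_mul_log_one_sub_zero :
    ContinuousAt (fun x ↦ log x * log (1 - x)) 0 := by
  have hO : (fun x ↦ log (1 - x)) =O[𝓝 0] fun x ↦ x := by
    have hd : DifferentiableAt ℝ (fun x ↦ log (1 - x)) 0 :=
      ((differentiableAt_id).const_sub 1).log (by simp)
    simpa using hd.isBigO_sub
  have hlim : Tendsto (fun x ↦ x * log x) (𝓝 0) (𝓝 0) := by
    simpa using Real.continuous_mul_log.tendsto 0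
  refine ((hO.mul (Asymptotics.isBigO_refl log _)).trans_tendsto hlim).congr' ?_ |>.trans ?_
  · exact .of_forall fun x ↦ mul_comm _ _
  · simp

lemma dilog_add_dilog_one_sub {x : ℝ} (hx0 : 0 < x) (hx1 : x < 1) :
    dilog x + dilog (1 - x) = π ^ 2 / 6 - log x * log (1 - x) := by
  have hcont : ContinuousOn (fun y ↦ dilog y + dilog (1 - y) + log y * log (1 - y)) (Icc 0 x) := by
    refine .add (.add (continuousOn_dilog_real.mono ?_)
      (continuousOn_dilog_real.comp (by fun_prop) ?_)) fun y hy ↦ ?_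
    · exact Icc_subset_Icc (by norm_num) hx1.le
    · exact fun y hy ↦ ⟨by linarith [hy.2], by linarith [hy.1]⟩
    · rcases hy.1.eq_or_lt with rfl | hy0
      · exact continuousAt_log_mul_log_one_sub_zero.continuousWithinAt
      · have : 1 - y ≠ 0 := by linarith [hy.2]
        exact ContinuousAt.continuousWithinAt (by fun_prop (disch := grind))
  have hderiv : ∀ y ∈ Ioo 0 x,
      HasDerivAt (fun y ↦ dilog y + dilog (1 - y) + log y * log (1 - y)) 0 y := by
    rintro y ⟨hy0, hyx⟩
    have hy1 : 0 < 1 - y := by linarith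
    have hsub : HasDerivAt (fun y : ℝ ↦ 1 - y) (-1) y := (hasDerivAt_id y).const_sub 1
    have hd := hasDerivAt_dilog_real (abs_lt.2 ⟨by linarith, by linarith⟩) hy0.ne'
    have hd' := hasDerivAt_dilog_real (abs_lt.2 ⟨by linarith, by linarith⟩) hy1.ne'
    refine ((hd.add (hd'.comp y hsub)).add
      ((Real.hasDerivAt_log hy0.ne').mul (hsub.log hy1.ne'))).congr_deriv ?_
    rw [sub_sub_cancel]
    field_simp
    ring
  have h := eq_of_hasDerivAt_zero hx0.le hcont hderiv
  simp only [dilog_zero, sub_zero, dilog_one, log_zero, zero_mul, zero_add, add_zero] at h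
  linear_combination h

lemma dilog_neg_add_dilog_div_one_add {x : ℝ} (hx0 : 0 ≤ x) (hx1 : x ≤ 1) :
    dilog (-x) + dilog (x / (1 + x)) = -log (1 + x) ^ 2 / 2 := by
  have hcont : ContinuousOn
      (fun y ↦ dilog (-y) + dilog (y / (1 + y)) + log (1 + y) ^ 2 / 2) (Icc 0 x) := by
    have hne : ∀ y ∈ Icc 0 x, 1 + y ≠ 0 := fun y hy ↦ by linarith [hy.1]
    refine .add (.add (continuousOn_dilog_real.comp (by fun_prop) ?_)
      (continuousOn_dilog_real.comp (by fun_prop (disch := assumption)) ?_))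
      (by fun_prop (disch := assumption))
    · exact fun y hy ↦ ⟨by linarith [hy.2], by linarith [hy.1]⟩
    · refine fun y ⟨hy0, _⟩ ↦ ⟨by linarith [show 0 ≤ y / (1 + y) by positivity], ?_⟩
      exact div_le_one_of_le₀ (by linarith) (by linarith)
  have hderiv : ∀ y ∈ Ioo 0 x,
      HasDerivAt (fun y ↦ dilog (-y) + dilog (y / (1 + y)) + log (1 + y) ^ 2 / 2) 0 y := by
    rintro y ⟨hy0, hyx⟩
    have hy1 : 0 < 1 + y := by linarith
    have hq0 : 0 < y / (1 + y) := by positivity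
    have hq1 : y / (1 + y) < 1 := (div_lt_one hy1).2 (by linarith)
    have hadd : HasDerivAt (fun y : ℝ ↦ 1 + y) 1 y := (hasDerivAt_id y).const_add 1
    have hd := hasDerivAt_dilog_real (x := -y) (abs_lt.2 ⟨by linarith, by linarith⟩)
      (neg_ne_zero.2 hy0.ne')
    have hd' := hasDerivAt_dilog_real (abs_lt.2 ⟨by linarith, hq1⟩) hq0.ne'
    refine (((hd.comp y (hasDerivAt_neg y)).add
      (hd'.comp y ((hasDerivAt_id y).div hadd hy1.ne'))).add
      (((hadd.log hy1.ne').pow 2).div_const 2)).congr_deriv ?_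
    rw [sub_neg_eq_add, show 1 - y / (1 + y) = (1 + y)⁻¹ by field_simp; ring, log_inv]
    simp only [id_eq]
    field_simp
    ring
  have h := eq_of_hasDerivAt_zero hx0 hcont hderiv
  simp only [neg_zero, zero_div, dilog_zero, add_zero, log_one] at h
  linear_combination h

lemma one_sub_inv_goldenRatio : 1 - goldenRatio⁻¹ = goldenRatio⁻¹ ^ 2 := by
  rw [inv_goldenRatio, neg_sq, goldenConj_sq, sub_neg_eq_add, add_comm]

lemma dilog_inv_goldenRatio : dilog goldenRatio⁻¹ = π ^ 2 / 10 - log goldenRatio ^ 2 := by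
  have h0 : 0 < goldenRatio⁻¹ := inv_pos.2 goldenRatio_pos
  have h1 : goldenRatio⁻¹ < 1 := inv_lt_one_of_one_lt₀ one_lt_goldenRatio
  have hadd : 1 + goldenRatio⁻¹ = goldenRatio := by
    rw [inv_goldenRatio, ← sub_eq_add_neg, one_sub_goldenRatio]
  have reflection := dilog_add_dilog_one_sub h0 h1
  have landen := dilog_neg_add_dilog_div_one_add h0.le h1.le
  have duplication := dilog_add_dilog_neg (z := goldenRatio⁻¹) ((abs_of_pos h0).trans_le h1.le)
  rw [one_sub_inv_goldenRatio, log_pow, log_inv] at reflection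
  rw [hadd, div_eq_mul_inv, ← sq] at landen
  push_cast at reflection
  linear_combination (2 / 5) * (duplication - landen) + (3 / 5) * reflection

end RealDilogarithm

section Arcsine

/-- The coefficient `(1/2)ₙ / n! / (2n+1)ᵏ`. -/
noncomputable def arcsinCoeff (k n : ℕ) : ℝ := poch (1 / 2) n / n ! / (2 * n + 1) ^ k

/-- The series `∑ (1/2)ₙ / n! · uⁿ / (2n+1)ᵏ`. In terms of `x = √u`, its product with `x` is
`x / √(1 - x²)` for `k = 0`, `arcsin x` for `k = 1` and `∫₀ˣ arcsin t / t dt` for `k = 2`. -/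
noncomputable def arcsinSeries {𝕜 : Type*} [RCLike 𝕜] (k : ℕ) (u : 𝕜) : 𝕜 :=
  ∑' n : ℕ, (arcsinCoeff k n : 𝕜) * u ^ n

lemma arcsinCoeff_eq_mul_arcsinCoeff_succ (k n : ℕ) :
    arcsinCoeff k n = (2 * n + 1) * arcsinCoeff (k + 1) n := by
  unfold arcsinCoeff
  field_simp
  ring

lemma arcsinCoeff_nonneg (k n : ℕ) : 0 ≤ arcsinCoeff k n := by
  have := poch_pos one_half_pos n
  unfold arcsinCoeff
  positivity

lemma arcsinCoeff_le_one (k n : ℕ) : arcsinCoeff k n ≤ 1 := by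
  have hpoch : poch (1 / 2) n ≤ n ! := by
    simpa [poch_one] using poch_le_poch one_half_pos (by norm_num : (1 / 2 : ℝ) ≤ 1) n
  have hpow : (1 : ℝ) ≤ (2 * n + 1) ^ k := one_le_pow₀ (by linarith [n.cast_nonneg (α := ℝ)])
  exact div_le_one_of_le₀ ((div_le_one_of_le₀ hpoch (by positivity)).trans hpow) (by positivity)

lemma ofReal_arcsinSeries (k : ℕ) (x : ℝ) :
    ((arcsinSeries k x : ℝ) : ℂ) = arcsinSeries k (x : ℂ) := by
  simp [arcsinSeries, Complex.ofReal_tsum]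

section

variable {𝕜 : Type*} [RCLike 𝕜]

lemma norm_arcsinCoeff_le_one (k n : ℕ) : ‖(arcsinCoeff k n : 𝕜)‖ ≤ 1 := by
  rw [RCLike.norm_ofReal, abs_of_nonneg (arcsinCoeff_nonneg k n)]
  exact arcsinCoeff_le_one k n

lemma hasSum_arcsinSeries (k : ℕ) {u : 𝕜} (hu : ‖u‖ < 1) :
    HasSum (fun n ↦ (arcsinCoeff k n : 𝕜) * u ^ n) (arcsinSeries k u) :=
  (summable_mul_pow_of_bounded (norm_arcsinCoeff_le_one k) hu).hasSum

lemma hasDerivAt_mul_arcsinSeries_sq (k : ℕ) {x : 𝕜} (hx : ‖x‖ < 1) :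
    HasDerivAt (fun y ↦ y * arcsinSeries (k + 1) (y ^ 2)) (arcsinSeries k (x ^ 2)) x := by
  have hx2 : ‖x ^ 2‖ < 1 := by simpa using pow_lt_one₀ (norm_nonneg x) hx two_ne_zero
  obtain ⟨d, hd, hsum⟩ :=
    exists_hasDerivAt_tsum_mul_pow (norm_arcsinCoeff_le_one (𝕜 := 𝕜) (k + 1)) hx2
  change HasDerivAt (arcsinSeries (k + 1)) d (x ^ 2) at hd
  have heuler : arcsinSeries (k + 1) (x ^ 2) + 2 * (x ^ 2 * d) = arcsinSeries k (x ^ 2) := by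
    refine ((hasSum_arcsinSeries (k + 1) hx2).add (hsum.mul_left 2)).unique
      ((hasSum_arcsinSeries k hx2).congr_fun fun n ↦ ?_)
    rw [arcsinCoeff_eq_mul_arcsinCoeff_succ k n]
    push_cast
    ring
  have hpow : HasDerivAt (fun y : 𝕜 ↦ y ^ 2) (2 * x) x := by simpa using hasDerivAt_pow 2 x
  refine ((hasDerivAt_id x).mul (hd.comp x hpow)).congr_deriv ?_
  change 1 * arcsinSeries (k + 1) (x ^ 2) + x * (d * (2 * x)) = _
  rw [← heuler]
  ring

end

lemma choose_eq_arcsinCoeff_zero (n : ℕ) :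
    Ring.choose ((1 / 2 : ℂ) + n - 1) n = arcsinCoeff 0 n := by
  have hreal : Ring.multichoose (1 / 2 : ℝ) n = arcsinCoeff 0 n := by
    have := Ring.factorial_nsmul_multichoose_eq_ascPochhammer (1 / 2 : ℝ) n
    rw [Polynomial.ascPochhammer_smeval_eq_eval, nsmul_eq_mul] at this
    rw [arcsinCoeff, poch, ← this]
    field_simp
  rw [← Ring.multichoose_eq, ← hreal]
  simpa using (Ring.map_multichoose Complex.ofRealHom (1 / 2 : ℝ) n).symm

lemma arcsinSeries_zero_eq_cpow {u : ℂ} (hu : ‖u‖ < 1) :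
    arcsinSeries 0 u = 1 / (1 - u) ^ (2⁻¹ : ℂ) := by
  have h := (Complex.one_div_one_sub_cpow_hasFPowerSeriesOnBall_zero (1 / 2)).hasSum
    (y := u) (by simpa [← ofReal_norm] using hu)
  simp only [FormalMultilinearSeries.ofScalars_apply_eq, choose_eq_arcsinCoeff_zero, smul_eq_mul,
    zero_add] at h
  simpa using (hasSum_arcsinSeries 0 hu).unique h

end Arcsine

section ComplexTrigonometry

lemma abs_mul_le_abs {t : ℝ} (ht : t ∈ Icc 0 1) (x : ℝ) : |t * x| ≤ |x| := by
  rw [abs_mul, abs_of_nonneg ht.1]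
  exact mul_le_of_le_one_left (abs_nonneg x) ht.2

lemma abs_re_real_mul_le {t : ℝ} (ht : t ∈ Icc 0 1) (z : ℂ) : |(t * z : ℂ).re| ≤ |z.re| := by
  rw [Complex.re_ofReal_mul]
  exact abs_mul_le_abs ht z.re

lemma norm_sin_sq (z : ℂ) : ‖Complex.sin z‖ ^ 2 = sin z.re ^ 2 + sinh z.im ^ 2 := by
  rw [Complex.sin_eq, ← Complex.ofReal_sin, ← Complex.ofReal_cosh, ← Complex.ofReal_cos,
    ← Complex.ofReal_sinh, ← Complex.ofReal_mul, ← Complex.ofReal_mul, Complex.sq_norm,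
    Complex.normSq_add_mul_I]
  linear_combination sin z.re ^ 2 * cosh_sq z.im + sinh z.im ^ 2 * sin_sq_add_cos_sq z.re

lemma norm_sin_real_mul_le {z : ℂ} {t : ℝ} (hz : |z.re| ≤ π / 2) (ht : t ∈ Icc 0 1) :
    ‖Complex.sin (t * z)‖ ≤ ‖Complex.sin z‖ := by
  have hsin : |sin (t * z.re)| ≤ |sin z.re| := by
    rw [abs_sin_eq_sin_abs_of_abs_le_pi (by linarith [abs_mul_le_abs ht z.re, pi_pos]),
      abs_sin_eq_sin_abs_of_abs_le_pi (by linarith [pi_pos])]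
    exact sin_le_sin_of_le_of_le_pi_div_two (by linarith [abs_nonneg (t * z.re), pi_pos]) hz
      (abs_mul_le_abs ht _)
  have hsinh : |sinh (t * z.im)| ≤ |sinh z.im| := by
    rw [abs_sinh, abs_sinh]
    exact sinh_le_sinh.2 (abs_mul_le_abs ht _)
  rw [← sq_le_sq₀ (norm_nonneg _) (norm_nonneg _), norm_sin_sq, norm_sin_sq,
    Complex.re_ofReal_mul, Complex.im_ofReal_mul]
  exact add_le_add (sq_le_sq.2 hsin) (sq_le_sq.2 hsinh)

lemma cos_re_pos {z : ℂ} (hz : |z.re| < π / 2) : 0 < (Complex.cos z).re := by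
  have hcos : (Complex.cos z).re = cos z.re * cosh z.im := by
    rw [Complex.cos_eq, ← Complex.ofReal_sin, ← Complex.ofReal_cosh, ← Complex.ofReal_cos,
      ← Complex.ofReal_sinh, ← Complex.ofReal_mul, ← Complex.ofReal_mul]
    simp [-Complex.ofReal_mul]
  rw [hcos]
  exact mul_pos (cos_pos_of_mem_Ioo (abs_lt.1 hz)) (cosh_pos _)

lemma norm_one_sub_exp_sq (z : ℂ) :
    ‖1 - Complex.exp z‖ ^ 2 = 1 - 2 * rexp z.re * cos z.im + rexp z.re ^ 2 := by
  rw [Complex.sq_norm, Complex.normSq_apply, Complex.sub_re, Complex.sub_im, Complex.exp_re,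
    Complex.exp_im, Complex.one_re, Complex.one_im]
  linear_combination rexp z.re ^ 2 * sin_sq_add_cos_sq z.im

-- The condition `‖1 - exp z‖ ≤ 1` reads `exp x ≤ 2 cos y`, and in `t` the left side is convex
-- while the right side is concave.
lemma norm_one_sub_exp_real_mul_lt_one {z : ℂ} {t : ℝ} (hz : ‖1 - Complex.exp z‖ ≤ 1)
    (him : |z.im| ≤ π / 2) (ht : t ∈ Ico 0 1) : ‖1 - Complex.exp (t * z)‖ < 1 := by
  have hexp : rexp z.re ≤ 2 * cos z.im := by
    have := pow_le_one₀ (norm_nonneg _) hz (n := 2)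
    rw [norm_one_sub_exp_sq] at this
    nlinarith [exp_pos z.re]
  have hconvex : rexp (t * z.re) ≤ t * rexp z.re + (1 - t) := by
    simpa using convexOn_exp.2 (mem_univ z.re) (mem_univ 0) ht.1 (sub_nonneg.2 ht.2.le)
      (add_sub_cancel t 1)
  have hconcave : t * cos z.im + (1 - t) ≤ cos (t * z.im) := by
    have h0 : (0 : ℝ) ∈ Icc (-(π / 2)) (π / 2) := ⟨by linarith [pi_pos], by linarith [pi_pos]⟩
    simpa using strictConcaveOn_cos_Icc.concaveOn.2 (abs_le.1 him) h0 ht.1 (sub_nonneg.2 ht.2.le)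
      (add_sub_cancel t 1)
  have hlt : rexp (t * z.re) < 2 * cos (t * z.im) := by
    linarith [mul_le_mul_of_nonneg_left hexp ht.1, ht.2]
  rw [← sq_lt_one_iff₀ (norm_nonneg _), norm_one_sub_exp_sq, Complex.re_ofReal_mul,
    Complex.im_ofReal_mul]
  nlinarith [exp_pos (t * z.re)]

end ComplexTrigonometry

section ArcsineDilogarithm

variable {z : ℂ}

lemma arcsinSeries_zero_sin_sq_mul_cos (hsin : ‖Complex.sin z‖ < 1) (hre : |z.re| < π / 2) :
    arcsinSeries 0 (Complex.sin z ^ 2) * Complex.cos z = 1 := by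
  have hcos := cos_re_pos hre
  have hsq : ‖Complex.sin z ^ 2‖ < 1 := by
    simpa using pow_lt_one₀ (norm_nonneg _) hsin two_ne_zero
  rw [arcsinSeries_zero_eq_cpow hsq, ← Complex.cos_sq', Complex.sq_cpow_two_inv hcos,
    one_div_mul_cancel fun h ↦ by simp [h] at hcos]

lemma hasDerivAt_sin_mul_arcsinSeries (k : ℕ) (hsin : ‖Complex.sin z‖ < 1) :
    HasDerivAt (fun w ↦ Complex.sin w * arcsinSeries (k + 1) (Complex.sin w ^ 2))
      (arcsinSeries k (Complex.sin z ^ 2) * Complex.cos z) z :=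
  (hasDerivAt_mul_arcsinSeries_sq k hsin).comp z (Complex.hasDerivAt_sin z)

lemma sin_mul_arcsinSeries_one (hsin : ‖Complex.sin z‖ < 1) (hre : |z.re| < π / 2) :
    Complex.sin z * arcsinSeries 1 (Complex.sin z ^ 2) = z := by
  have hderiv : ∀ t ∈ Icc (0 : ℝ) 1, HasDerivAt
      (fun w ↦ Complex.sin w * arcsinSeries 1 (Complex.sin w ^ 2) - w) 0 (t * z) := fun t ht ↦ by
    have hsin' := (norm_sin_real_mul_le hre.le ht).trans_lt hsin
    have hre' := (abs_re_real_mul_le ht z).trans_lt hre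
    exact ((hasDerivAt_sin_mul_arcsinSeries 0 hsin').sub (hasDerivAt_id _)).congr_deriv
      (sub_eq_zero.2 (arcsinSeries_zero_sin_sq_mul_cos hsin' hre'))
  have := eq_apply_zero_of_hasDerivAt_zero_on_ray
    (continuousOn_comp_real_mul fun t ht ↦ (hderiv t ht).continuousAt)
    fun t ht ↦ hderiv t (Ioo_subset_Icc_self ht)
  simpa [sub_eq_zero] using this

lemma exp_neg_two_mul_mul_I (z : ℂ) :
    Complex.exp (-(2 * z * Complex.I)) = (Complex.cos z - Complex.sin z * Complex.I) ^ 2 := by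
  rw [Complex.cos_sub_sin_I, ← Complex.exp_nat_mul]
  congr 1
  push_cast
  ring

lemma one_sub_exp_neg_two_mul_mul_I (z : ℂ) : 1 - Complex.exp (-(2 * z * Complex.I)) =
    2 * Complex.I * Complex.sin z * (Complex.cos z - Complex.sin z * Complex.I) := by
  rw [exp_neg_two_mul_mul_I]
  linear_combination -Complex.sin_sq_add_cos_sq z + Complex.sin z ^ 2 * Complex.I_sq

lemma hasDerivAt_dilog_one_sub_exp (hsin : ‖Complex.sin z‖ < 1) (hre : |z.re| < π / 2)
    (hexp : ‖1 - Complex.exp (-(2 * z * Complex.I))‖ < 1) (hz : z ≠ 0) :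
    HasDerivAt (fun w ↦ dilog (1 - Complex.exp (-(2 * w * Complex.I))))
      (2 * Complex.I * (arcsinSeries 1 (Complex.sin z ^ 2) * Complex.cos z) + 2 * z) z := by
  have harcsin := sin_mul_arcsinSeries_one hsin hre
  have hsin0 : Complex.sin z ≠ 0 := fun h ↦ hz (by rw [← harcsin, h, zero_mul])
  have hcis0 : Complex.cos z - Complex.sin z * Complex.I ≠ 0 := by
    rw [Complex.cos_sub_sin_I]
    exact Complex.exp_ne_zero _
  have hlog : Complex.log (1 - (1 - Complex.exp (-(2 * z * Complex.I)))) =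
      -(2 * z * Complex.I) := by
    have him : (-(2 * z * Complex.I)).im = -(2 * z.re) := by simp
    obtain ⟨hlo, hhi⟩ := abs_lt.1 hre
    rw [sub_sub_cancel, Complex.log_exp (by linarith) (by linarith)]
  have hinner : HasDerivAt (fun w ↦ 1 - Complex.exp (-(2 * w * Complex.I)))
      (2 * Complex.I * Complex.exp (-(2 * z * Complex.I))) z := by
    have hlin : HasDerivAt (fun w ↦ -(2 * w * Complex.I)) (-(2 * 1 * Complex.I)) z :=
      (((hasDerivAt_id z).const_mul 2).mul_const Complex.I).neg
    exact (hlin.cexp.const_sub 1).congr_deriv (by ring)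
  have hne : 1 - Complex.exp (-(2 * z * Complex.I)) ≠ 0 := by
    rw [one_sub_exp_neg_two_mul_mul_I]
    exact mul_ne_zero (mul_ne_zero (mul_ne_zero two_ne_zero Complex.I_ne_zero) hsin0) hcis0
  refine ((hasDerivAt_dilog_complex hexp hne).comp z hinner).congr_deriv ?_
  rw [hlog, one_sub_exp_neg_two_mul_mul_I, exp_neg_two_mul_mul_I,
    eq_div_of_mul_eq hsin0 ((mul_comm _ _).trans harcsin)]
  field_simp
  linear_combination -Complex.sin z * Complex.I_sq

lemma two_mul_I_mul_sin_mul_arcsinSeries_two (hsin : ‖Complex.sin z‖ < 1) (hre : |z.re| ≤ π / 4)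
    (hexp : ‖1 - Complex.exp (-(2 * z * Complex.I))‖ ≤ 1) :
    2 * Complex.I * (Complex.sin z * arcsinSeries 2 (Complex.sin z ^ 2)) + z ^ 2 =
      dilog (1 - Complex.exp (-(2 * z * Complex.I))) := by
  rcases eq_or_ne z 0 with rfl | hz
  · simp [dilog_zero]
  have hre2 : |z.re| < π / 2 := by linarith [pi_pos]
  have hsin' : ∀ t ∈ Icc (0 : ℝ) 1, ‖Complex.sin (t * z)‖ < 1 := fun t ht ↦
    (norm_sin_real_mul_le hre2.le ht).trans_lt hsin
  have hexp' : ∀ t ∈ Ico (0 : ℝ) 1, ‖1 - Complex.exp (-(2 * (t * z) * Complex.I))‖ < 1 :=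
    fun t ht ↦ by
    have him : |(-(2 * z * Complex.I)).im| ≤ π / 2 := by
      have : |(-(2 * z * Complex.I)).im| = 2 * |z.re| := by simp [abs_mul]
      linarith
    convert norm_one_sub_exp_real_mul_lt_one hexp him ht using 4
    ring
  have hderiv : ∀ t ∈ Icc (0 : ℝ) 1, HasDerivAt
      (fun w ↦ 2 * Complex.I * (Complex.sin w * arcsinSeries 2 (Complex.sin w ^ 2)) + w ^ 2)
      (2 * Complex.I * (arcsinSeries 1 (Complex.sin (t * z) ^ 2) * Complex.cos (t * z)) +
        2 * (t * z)) (t * z) := fun t ht ↦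
    (((hasDerivAt_sin_mul_arcsinSeries 1 (hsin' t ht)).const_mul
      (2 * Complex.I)).add (hasDerivAt_pow 2 (t * z : ℂ))).congr_deriv (by simp)
  have hdilog : ContinuousOn
      (fun t : ℝ ↦ dilog (1 - Complex.exp (-(2 * (t * z) * Complex.I)))) (Icc 0 1) := by
    refine continuousOn_dilog.comp (by fun_prop) fun t ht ↦ mem_closedBall_zero_iff.2 ?_
    rcases ht.2.eq_or_lt with rfl | ht1
    · simpa using hexp
    · exact (hexp' t ⟨ht.1, ht1⟩).le
  have := eq_apply_zero_of_hasDerivAt_zero_on_ray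
    ((continuousOn_comp_real_mul fun t ht ↦ (hderiv t ht).continuousAt).sub hdilog) fun t ht ↦
      ((hderiv t (Ioo_subset_Icc_self ht)).sub (hasDerivAt_dilog_one_sub_exp
        (hsin' t (Ioo_subset_Icc_self ht))
        ((abs_re_real_mul_le (Ioo_subset_Icc_self ht) z).trans_lt hre2)
        (hexp' t (Ioo_subset_Ico_self ht))
        (mul_ne_zero (Complex.ofReal_ne_zero.2 ht.1.ne') hz))).congr_deriv (sub_self _)
  simpa [dilog_zero, sub_eq_zero] using this

end ArcsineDilogarithm

section Clausen

/-- The Clausen function `Cl₂(θ) = ∑ sin(nθ) / n²`, encoded as the imaginary part of `Li₂(e^{iθ})`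
so that it inherits the duplication formula of the dilogarithm. -/
noncomputable def clausen (θ : ℝ) : ℝ := (dilog (Complex.exp (θ * Complex.I))).im

lemma hasSum_clausen (θ : ℝ) : HasSum (fun n : ℕ ↦ sin (n * θ) / n ^ 2) (clausen θ) := by
  refine (Complex.hasSum_im (hasSum_dilog (Complex.norm_exp_ofReal_mul_I θ).le)).congr_fun
    fun n ↦ ?_
  rw [← Complex.exp_nat_mul, ← mul_assoc, ← Complex.ofReal_natCast, ← Complex.ofReal_mul,
    ← Complex.ofReal_pow, ← Complex.ofReal_one, ← Complex.ofReal_div, Complex.im_ofReal_mul,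
    Complex.exp_ofReal_mul_I_im]
  ring

lemma clausen_neg (θ : ℝ) : clausen (-θ) = -clausen θ :=
  (hasSum_clausen (-θ)).unique ((hasSum_clausen θ).neg.congr_fun fun n ↦ by
    rw [mul_neg, sin_neg, neg_div])

lemma clausen_add_two_pi (θ : ℝ) : clausen (θ + 2 * π) = clausen θ := by
  simp [clausen, add_mul, Complex.exp_periodic _]

lemma clausen_add_clausen_add_pi (θ : ℝ) :
    clausen θ + clausen (θ + π) = clausen (2 * θ) / 2 := by
  have h := congr_arg Complex.im
    (dilog_add_dilog_neg (Complex.norm_exp_ofReal_mul_I θ).le)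
  have hneg : Complex.exp ((θ + π : ℝ) * Complex.I) = -Complex.exp (θ * Complex.I) := by
    rw [Complex.ofReal_add, add_mul, Complex.exp_add_pi_mul_I]
  have hsq : Complex.exp ((2 * θ : ℝ) * Complex.I) = Complex.exp (θ * Complex.I) ^ 2 := by
    rw [← Complex.exp_nat_mul]
    push_cast
    ring_nf
  rw [clausen, clausen, clausen, hneg, hsq, ← Complex.add_im, h]
  simp

lemma clausen_pi_div_three_eq_mul_clausen_two_pi_div_three :
    clausen (π / 3) = 3 / 2 * clausen (2 * π / 3) := by
  have hreflect : clausen (π / 3 + π) = -clausen (2 * π / 3) := by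
    rw [← clausen_neg, ← clausen_add_two_pi (-_)]
    ring_nf
  have hdouble := clausen_add_clausen_add_pi (π / 3)
  rw [hreflect, ← mul_div_assoc] at hdouble
  linear_combination hdouble

lemma tsum_eq_tsum_residues_mod_three {E : Type*} [AddCommGroup E] [UniformSpace E]
    [IsUniformAddGroup E] [CompleteSpace E] [T0Space E] {f : ℕ → E} (hf : Summable f) :
    ∑' n, f n = ∑' n, f (3 * n) + ∑' n, f (3 * n + 1) + ∑' n, f (3 * n + 2) := by
  rw [Nat.sumByResidueClasses hf 3]
  refine (Fin.sum_univ_three _).trans ?_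
  congr 1
  · congr 1 <;> refine tsum_congr fun n ↦ congrArg f ?_
    · exact zero_add _
    · exact add_comm _ _
  · exact tsum_congr fun n ↦ congrArg f (add_comm _ _)

lemma tsum_one_div_three_mul_add_one_add_tsum_one_div_three_mul_add_two :
    ∑' n : ℕ, 1 / (3 * n + 1 : ℝ) ^ 2 + ∑' n : ℕ, 1 / (3 * n + 2 : ℝ) ^ 2 = 4 * π ^ 2 / 27 := by
  have hmod := tsum_eq_tsum_residues_mod_three hasSum_zeta_two.summable
  have hthree : ∑' n : ℕ, 1 / ((3 * n : ℕ) : ℝ) ^ 2 = π ^ 2 / 6 / 9 :=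
    ((hasSum_zeta_two.div_const 9).congr_fun fun n ↦ by push_cast; ring).tsum_eq
  rw [hasSum_zeta_two.tsum_eq, hthree] at hmod
  push_cast at hmod
  linear_combination -hmod

lemma clausen_two_pi_div_three :
    clausen (2 * π / 3) = √3 / 2 *
      (∑' n : ℕ, 1 / (3 * n + 1 : ℝ) ^ 2 - ∑' n : ℕ, 1 / (3 * n + 2 : ℝ) ^ 2) := by
  have hsin (n : ℕ) (x : ℝ) : sin ((3 * n + x) * (2 * π / 3)) = sin (x * (2 * π / 3)) := by
    rw [← sin_add_nat_mul_two_pi (x * _) n]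
    ring_nf
  have hone : sin (1 * (2 * π / 3)) = √3 / 2 := by
    rw [← sin_pi_div_three, ← sin_pi_sub]
    ring_nf
  have htwo : sin (2 * (2 * π / 3)) = -(√3 / 2) := by
    rw [← sin_pi_div_three, ← sin_add_pi]
    ring_nf
  have hmod := tsum_eq_tsum_residues_mod_three (hasSum_clausen (2 * π / 3)).summable
  rw [(hasSum_clausen _).tsum_eq] at hmod
  push_cast at hmod
  have hzero (n : ℕ) : sin (3 * n * (2 * π / 3)) = 0 := by simpa using hsin n 0
  simp only [hzero, hsin, hone, htwo, zero_div, tsum_zero, zero_add, neg_div, tsum_neg,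
    div_eq_mul_one_div (√3 / 2) (_ ^ 2), tsum_mul_left] at hmod
  linear_combination hmod

lemma clausen_pi_div_three :
    clausen (π / 3) = 9 / (2 * √3) * ∑' n : ℕ, 1 / (3 * n + 1 : ℝ) ^ 2 - π ^ 2 / (3 * √3) := by
  have hresidues := tsum_one_div_three_mul_add_one_add_tsum_one_div_three_mul_add_two
  have hinv : (√3)⁻¹ = √3 / 3 := by
    field_simp
    simp
  rw [clausen_pi_div_three_eq_mul_clausen_two_pi_div_three, clausen_two_pi_div_three,
    eq_sub_of_add_eq' hresidues]
  generalize ∑' n : ℕ, 1 / (3 * n + 1 : ℝ) ^ 2 = T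
  linear_combination (π ^ 2 / 3 - 9 / 2 * T) * hinv

end Clausen

section SpecialValues

lemma arcsinSeries_two_neg_one_div_four : arcsinSeries 2 (-(1 / 4) : ℝ) = π ^ 2 / 10 := by
  set z : ℂ := -(log goldenRatio * Complex.I) with hz
  have hre : |z.re| ≤ π / 4 := by
    have : z.re = 0 := by simp [hz]
    rw [this, abs_zero]
    positivity
  have hsin : Complex.sin z = -(Complex.I / 2) := by
    have hsinh : sinh (log goldenRatio) = 1 / 2 := by
      rw [sinh_log goldenRatio_pos, inv_goldenRatio, sub_neg_eq_add, goldenRatio_add_goldenConj]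
    rw [hz, Complex.sin_neg, Complex.sin_mul_I, ← Complex.ofReal_sinh, hsinh]
    push_cast
    ring
  have hexp : 1 - Complex.exp (-(2 * z * Complex.I)) = (goldenRatio⁻¹ : ℝ) := by
    have hreal : -(2 * z * Complex.I) = (2 * -log goldenRatio : ℝ) := by
      push_cast
      linear_combination 2 * (log goldenRatio : ℂ) * Complex.I_sq
    rw [hreal, ← Complex.ofReal_exp, two_mul, exp_add, exp_neg, exp_log goldenRatio_pos, ← sq,
      ← one_sub_inv_goldenRatio]
    simp
  have hnorm : ‖((goldenRatio⁻¹ : ℝ) : ℂ)‖ ≤ 1 := by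
    rw [Complex.norm_real, Real.norm_of_nonneg (inv_pos.2 goldenRatio_pos).le]
    exact inv_le_one_of_one_le₀ one_lt_goldenRatio.le
  have hzsq : z ^ 2 = -(log goldenRatio : ℂ) ^ 2 := by
    linear_combination (log goldenRatio : ℂ) ^ 2 * Complex.I_sq
  have hsq : (-(Complex.I / 2)) ^ 2 = ((-(1 / 4) : ℝ) : ℂ) := by
    push_cast
    linear_combination Complex.I_sq / 4
  have key := two_mul_I_mul_sin_mul_arcsinSeries_two (z := z)
    (by rw [hsin]; norm_num) hre (by rwa [hexp])
  rw [hsin, hexp, hsq, hzsq, ← ofReal_dilog, dilog_inv_goldenRatio, ← ofReal_arcsinSeries] at key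
  rw [← Complex.ofReal_inj]
  push_cast at key ⊢
  linear_combination key + (arcsinSeries 2 (-(1 / 4) : ℝ) : ℝ) * Complex.I_sq

lemma arcsinSeries_two_one_div_four : arcsinSeries 2 (1 / 4 : ℝ) = clausen (π / 3) := by
  have hsin : Complex.sin (π / 6 : ℝ) = (1 / 2 : ℝ) := by
    rw [← Complex.ofReal_sin, sin_pi_div_six]
  have hexp : 1 - Complex.exp (-(2 * (π / 6 : ℝ) * Complex.I)) =
      Complex.exp ((π / 3 : ℝ) * Complex.I) := by
    have hneg : -(2 * ((π / 6 : ℝ) : ℂ) * Complex.I) = -(π / 3 : ℝ) * Complex.I := by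
      push_cast
      ring
    rw [hneg, Complex.exp_mul_I, Complex.exp_mul_I, Complex.cos_neg, Complex.sin_neg,
      ← Complex.ofReal_cos, cos_pi_div_three]
    push_cast
    ring
  have hre : |((π / 6 : ℝ) : ℂ).re| ≤ π / 4 := by
    rw [Complex.ofReal_re, abs_of_pos (by positivity)]
    linarith [pi_pos]
  have key := two_mul_I_mul_sin_mul_arcsinSeries_two (by rw [hsin]; norm_num) hre
    (by rw [hexp, Complex.norm_exp_ofReal_mul_I])
  have hsq : ((1 / 2 : ℝ) : ℂ) ^ 2 = (1 / 4 : ℝ) := by norm_num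
  rw [hsin, hexp, hsq, ← ofReal_arcsinSeries] at key
  have him := congr_arg Complex.im key
  rw [← clausen, ← Complex.ofReal_pow, ← Complex.ofReal_mul] at him
  simpa [-Complex.ofReal_div, -Complex.ofReal_mul, -Complex.ofReal_pow] using him

end SpecialValues

section Hypergeometric

lemma mul_poch_add_one (a : ℝ) (n : ℕ) : a * poch (a + 1) n = poch a n * (a + n) := by
  rw [← poch_succ_left, poch_succ]

lemma poch_half_two_mul_add_one (n : ℕ) :
    poch (1 / 2) (2 * n + 1) = 4 ^ n * poch (3 / 4) n * poch (5 / 4) n / 2 := by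
  have h : poch (1 / 2 + 1) (2 * n) = 4 ^ n * poch (3 / 4) n * poch (5 / 4) n := by
    convert poch_two_mul (3 / 4) n using 2 <;> norm_num
  rw [poch_succ_left, h]
  ring

lemma factorial_two_mul_add_one (n : ℕ) :
    ((2 * n + 1)! : ℝ) = 4 ^ n * n ! * poch (3 / 2) n := by
  have h : poch (1 + 1) (2 * n) = 4 ^ n * poch 1 n * poch (3 / 2) n := by
    convert poch_two_mul 1 n using 2 <;> norm_num
  rw [← poch_one, poch_succ_left, one_mul, h, poch_one]

lemma arcsinCoeff_two_two_mul_add_one (n : ℕ) :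
    18 * arcsinCoeff 2 (2 * n + 1) = poch (3 / 4) n ^ 3 * poch (5 / 4) n /
      (poch (3 / 2) n * poch (7 / 4) n ^ 2 * n !) := by
  have h34 := poch_pos (show (0 : ℝ) < 3 / 4 by norm_num) n
  have h32 := poch_pos (show (0 : ℝ) < 3 / 2 by norm_num) n
  have h74 : poch (7 / 4) n = poch (3 / 4) n * (4 * n + 3) / 3 := by
    have := mul_poch_add_one (3 / 4) n
    rw [show (3 / 4 + 1 : ℝ) = 7 / 4 by norm_num] at this
    linear_combination 4 / 3 * this
  rw [arcsinCoeff, poch_half_two_mul_add_one, factorial_two_mul_add_one, h74]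
  push_cast
  field_simp
  ring

lemma hasSum_fourF_three {x : ℝ} (hx : |x| < 1) :
    HasSum (fun n : ℕ ↦ poch (3 / 4) n ^ 3 * poch (5 / 4) n /
        (poch (3 / 2) n * poch (7 / 4) n ^ 2 * n !) * x ^ (2 * n + 1))
      (9 * (arcsinSeries 2 x - arcsinSeries 2 (-x))) := by
  have hneg : HasSum (fun n ↦ (-1) ^ n * (arcsinCoeff 2 n * x ^ n)) (arcsinSeries 2 (-x)) :=
    (hasSum_arcsinSeries 2 (u := -x) (by rwa [norm_neg])).congr_fun fun n ↦ by
      rw [neg_pow x, mul_left_comm]; rfl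
  have hodd : HasSum (fun n ↦ arcsinCoeff 2 (2 * n + 1) * x ^ (2 * n + 1))
      ((arcsinSeries 2 x - arcsinSeries 2 (-x)) / 2) :=
    hasSum_odd_of_hasSum (hasSum_arcsinSeries 2 hx) hneg
  rw [show 9 * (arcsinSeries 2 x - arcsinSeries 2 (-x)) =
    18 * ((arcsinSeries 2 x - arcsinSeries 2 (-x)) / 2) by ring]
  exact (hodd.mul_left 18).congr_fun fun n ↦ by
    rw [← arcsinCoeff_two_two_mul_add_one, mul_assoc]

end Hypergeometric

/-- `₄F₃(3/4, 3/4, 3/4, 5/4; 3/2, 7/4, 7/4; 1/16)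
    = 36·[(1/(2√3))·ψ′(1/3) − π²·(1/10 + 1/(3√3))]`,
where `ψ′(1/3) = 9·∑_{k≥0} 1/(3k+1)²`. -/
theorem fourF_three_second :
    ∑' n : ℕ, (poch (3/4) n)^3 * poch (5/4) n /
        (poch (3/2) n * (poch (7/4) n)^2 * (n.factorial : ℝ)) * (1/16 : ℝ)^n
      = 36 * ((9 / (2 * Real.sqrt 3)) * (∑' k : ℕ, 1 / (3 * (k : ℝ) + 1)^2)
          - π^2 * (1/10 + 1/(3 * Real.sqrt 3))) := by
  have hseries := (hasSum_fourF_three (x := 1 / 4) (by norm_num [abs_lt])).mul_left 4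
  have hpow (n : ℕ) : (1 / 16 : ℝ) ^ n = 4 * (1 / 4) ^ (2 * n + 1) := by
    rw [pow_succ, pow_mul]
    norm_num
    ring
  simp only [mul_left_comm (4 : ℝ), ← hpow] at hseries
  rw [hseries.tsum_eq, arcsinSeries_two_one_div_four, clausen_pi_div_three,
    arcsinSeries_two_neg_one_div_four]
  ring
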